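/- arXiv:2602.21561 — 2 statements merged into one kernel-verified Lean document; each statement's English description precedes it below -/
import Mathlib

section
/- The function W̄ solves the stationary self-similar Burgers equation: for every real number y, −(1/2)·W̄(y) + ((3/2)·y + W̄(y))·W̄'(y) = 0, where W̄' denotes the derivative of W̄. -/
/-- The stable self-similar Burgers profile `W̄`. -/
noncomputable def Wbar (y : ℝ) : ℝ :=
  (-y / 2 + Real.sqrt (1 / 27 + y ^ 2 / 4)) ^ ((1 : ℝ) / 3) -
  (y / 2 + Real.sqrt (1 / 27 + y ^ 2 / 4)) ^ ((1 : ℝ) / 3)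

theorem Wbar_aux_lt (y : ℝ) : |y / 2| < Real.sqrt (1 / 27 + y ^ 2 / 4) := by
  apply Real.lt_sqrt_of_sq_lt
  rw [sq_abs]
  linarith [show (y / 2) ^ 2 = y ^ 2 / 4 by ring]

theorem Wbar_aux_pos (y : ℝ) : 0 < -y / 2 + Real.sqrt (1 / 27 + y ^ 2 / 4) ∧
    0 < y / 2 + Real.sqrt (1 / 27 + y ^ 2 / 4) := by
  have h := abs_lt.1 (Wbar_aux_lt y)
  constructor <;> linarith [h.1, h.2]

theorem Wbar_aux_cubic (y : ℝ) : Wbar y ^ 3 + Wbar y = -y := by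
  obtain ⟨hp, hq⟩ := Wbar_aux_pos y
  have hs : Real.sqrt (1 / 27 + y ^ 2 / 4) ^ 2 = 1 / 27 + y ^ 2 / 4 :=
    Real.sq_sqrt (by positivity)
  unfold Wbar
  generalize Real.sqrt (1 / 27 + y ^ 2 / 4) = r at *
  have ha : ((-y / 2 + r) ^ ((1 : ℝ) / 3)) ^ 3 = -y / 2 + r := by
    rw [← Real.rpow_natCast, ← Real.rpow_mul hp.le]; norm_num
  have hb : ((y / 2 + r) ^ ((1 : ℝ) / 3)) ^ 3 = y / 2 + r := by
    rw [← Real.rpow_natCast, ← Real.rpow_mul hq.le]; norm_num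
  have hab : (-y / 2 + r) ^ ((1 : ℝ) / 3) * (y / 2 + r) ^ ((1 : ℝ) / 3) = 1 / 3 := by
    have h3 : ((-y / 2 + r) ^ ((1 : ℝ) / 3) * (y / 2 + r) ^ ((1 : ℝ) / 3)) ^ 3
        = (1 / 3 : ℝ) ^ 3 := by
      rw [mul_pow, ha, hb]; linear_combination hs
    exact (pow_left_inj₀ (by positivity) (by norm_num) (by norm_num)).1 h3
  generalize (-y / 2 + r) ^ ((1 : ℝ) / 3) = a at *
  generalize (y / 2 + r) ^ ((1 : ℝ) / 3) = b at *
  linear_combination ha - hb - 3 * (a - b) * hab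

theorem Wbar_aux_diff (y : ℝ) : DifferentiableAt ℝ Wbar y := by
  obtain ⟨hp, hq⟩ := Wbar_aux_pos y
  have h0 : (1 / 27 + y ^ 2 / 4 : ℝ) ≠ 0 := by positivity
  have hr : DifferentiableAt ℝ (fun y : ℝ => Real.sqrt (1 / 27 + y ^ 2 / 4)) y :=
    DifferentiableAt.sqrt (by fun_prop) h0
  unfold Wbar
  apply DifferentiableAt.sub
  · exact DifferentiableAt.rpow_const (by fun_prop) (Or.inl (ne_of_gt hp))
  · exact DifferentiableAt.rpow_const (by fun_prop) (Or.inl (ne_of_gt hq))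

/-- `W̄` solves the stationary self-similar Burgers equation
`−(1/2) W̄(y) + ((3/2) y + W̄(y)) W̄'(y) = 0`. -/
theorem Wbar_selfSimilar_burgers (y : ℝ) :
    -(1 / 2) * Wbar y + ((3 / 2) * y + Wbar y) * deriv Wbar y = 0 := by
  have hd := (Wbar_aux_diff y).hasDerivAt
  have h1 := (hd.pow 3).add hd
  have h2 : HasDerivAt (fun x : ℝ => -x) (-1) y := (hasDerivAt_id y).neg
  have he : (Wbar ^ 3 + Wbar) = fun x : ℝ => -x := funext fun x => Wbar_aux_cubic x
  rw [he] at h1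
  have h3 := h1.unique h2
  have hc := Wbar_aux_cubic y
  norm_num at h3
  linear_combination (-(1 / 2) * Wbar y) * h3 + (3 / 2) * deriv Wbar y * hc
end

section
/- For every real number y, the following decay bounds hold: |W̄(y)| ≤ ⟨y⟩^{1/3}, |W̄'(y)| ≤ ⟨y⟩^{−2/3}, and |W̄''(y)| ≤ ⟨y⟩^{−5/3}, where W̄' and W̄'' denote the first and second derivatives of W̄. -/
lemma Wbar_cubic (y : ℝ) : -Wbar y - Wbar y ^ 3 = y := by
  have hr : |y / 2| < Real.sqrt (1 / 27 + y ^ 2 / 4) := by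
    apply Real.lt_sqrt_of_sq_lt
    rw [sq_abs]; nlinarith
  have hsq : Real.sqrt (1 / 27 + y ^ 2 / 4) ^ 2 = 1 / 27 + y ^ 2 / 4 :=
    Real.sq_sqrt (by positivity)
  rw [abs_lt] at hr
  unfold Wbar
  set r := Real.sqrt (1 / 27 + y ^ 2 / 4) with hrdef
  have hA : 0 < -y / 2 + r := by linarith [hr.2]
  have hB : 0 < y / 2 + r := by linarith [hr.1]
  have ha3 : ((-y / 2 + r) ^ ((1 : ℝ) / 3)) ^ 3 = -y / 2 + r := by
    rw [← Real.rpow_natCast, ← Real.rpow_mul hA.le]; norm_num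
  have hb3 : ((y / 2 + r) ^ ((1 : ℝ) / 3)) ^ 3 = y / 2 + r := by
    rw [← Real.rpow_natCast, ← Real.rpow_mul hB.le]; norm_num
  have hab : (-y / 2 + r) ^ ((1 : ℝ) / 3) * (y / 2 + r) ^ ((1 : ℝ) / 3) = 1 / 3 := by
    rw [← Real.mul_rpow hA.le hB.le]
    have : (-y / 2 + r) * (y / 2 + r) = (1 / 3 : ℝ) ^ (3 : ℝ) := by
      norm_num; nlinarith
    rw [this, ← Real.rpow_mul (by norm_num)]; norm_num
  generalize (-y / 2 + r) ^ ((1 : ℝ) / 3) = a at *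
  generalize (y / 2 + r) ^ ((1 : ℝ) / 3) = b at *
  linear_combination (-1 : ℝ) * ha3 + hb3 + 3 * (a - b) * hab

lemma Wbar_continuous : Continuous Wbar := by
  unfold Wbar
  refine Continuous.sub ?_ ?_ <;>
  refine Continuous.rpow_const ?_ (fun x => Or.inr (by norm_num)) <;> fun_prop

lemma Wbar_hasDerivAt (y : ℝ) :
    HasDerivAt Wbar (-(1 + 3 * Wbar y ^ 2))⁻¹ y := by
  have hf : HasDerivAt (fun w : ℝ => -w - w ^ 3) (-(1 + 3 * Wbar y ^ 2)) (Wbar y) := by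
    have := ((hasDerivAt_id (Wbar y)).neg).sub ((hasDerivAt_id (Wbar y)).pow 3)
    refine HasDerivAt.congr_deriv this ?_
    simp; ring
  refine HasDerivAt.of_local_left_inverse Wbar_continuous.continuousAt hf ?_
    (Filter.Eventually.of_forall Wbar_cubic)
  have : 0 < 1 + 3 * Wbar y ^ 2 := by positivity
  linarith

lemma Wbar_deriv2 (y : ℝ) :
    iteratedDeriv 2 Wbar y = -(6 * Wbar y) / (1 + 3 * Wbar y ^ 2) ^ 3 := by
  have h1 : deriv Wbar = fun y => (-(1 + 3 * Wbar y ^ 2))⁻¹ :=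
    funext fun y => (Wbar_hasDerivAt y).deriv
  rw [iteratedDeriv_succ, iteratedDeriv_one, h1]
  have hp : 0 < 1 + 3 * Wbar y ^ 2 := by positivity
  have h2 := (((((Wbar_hasDerivAt y).pow 2).const_mul 3).const_add 1).neg).inv
    (by simpa using (neg_ne_zero.mpr hp.ne'))
  refine (HasDerivAt.deriv (f' := _) h2).trans ?_
  simp only [Pi.neg_apply, Pi.pow_apply, inv_neg]
  field_simp
  norm_num
  ring

lemma Wbar_poly (s : ℝ) (hs : 0 ≤ s) :
    46656 * s ^ 3 * (1 + s + 2 * s ^ 2 + s ^ 3) ^ 5 ≤ (1 + 3 * s) ^ 18 := by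
  have h1 : 0 ≤ s * (1071 * s ^ 2 - 7.34) ^ 2 := by positivity
  have h2 : 0 ≤ s ^ 2 * (120.7 * s - 37.1) ^ 2 := by positivity
  have p (k : ℕ) : 0 ≤ s ^ k := pow_nonneg hs k
  have h3 : 0 ≤ (1 - 10 * s) ^ 2 * s := by positivity
  linarith [p 1, p 2, p 3, p 4, p 5, p 6, p 7, p 8, p 9, p 10, p 11, p 12, p 13, p 14, p 15,
    p 16, p 17, p 18]

theorem Wbar_decay_bounds (y : ℝ) :
    |Wbar y| ≤ Real.sqrt (1 + y ^ 2) ^ ((1 : ℝ) / 3) ∧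
    |deriv Wbar y| ≤ Real.sqrt (1 + y ^ 2) ^ (-(2 : ℝ) / 3) ∧
    |iteratedDeriv 2 Wbar y| ≤ Real.sqrt (1 + y ^ 2) ^ (-(5 : ℝ) / 3) := by
  have hX : 0 < Real.sqrt (1 + y ^ 2) := Real.sqrt_pos.mpr (by positivity)
  have hX2 : Real.sqrt (1 + y ^ 2) ^ 2 = 1 + y ^ 2 := Real.sq_sqrt (by positivity)
  rw [Wbar_deriv2, (Wbar_hasDerivAt y).deriv]
  have hc := Wbar_cubic y
  set X := Real.sqrt (1 + y ^ 2)
  have hT : 0 < X ^ ((1 : ℝ) / 3) := Real.rpow_pos_of_pos hX _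
  have e3 : (X ^ ((1 : ℝ) / 3)) ^ 3 = X := by
    rw [← Real.rpow_natCast, ← Real.rpow_mul hX.le]; norm_num
  have e2 : X ^ (-(2 : ℝ) / 3) = ((X ^ ((1 : ℝ) / 3)) ^ 2)⁻¹ := by
    rw [← Real.rpow_natCast, ← Real.rpow_mul hX.le, ← Real.rpow_neg hX.le]; norm_num
  have e5 : X ^ (-(5 : ℝ) / 3) = ((X ^ ((1 : ℝ) / 3)) ^ 5)⁻¹ := by
    rw [← Real.rpow_natCast, ← Real.rpow_mul hX.le, ← Real.rpow_neg hX.le]; norm_num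
  rw [e2, e5]
  generalize X ^ ((1 : ℝ) / 3) = T at *
  generalize Wbar y = w at *
  have hs : 0 ≤ w ^ 2 := sq_nonneg w
  have hp : 0 < 1 + 3 * w ^ 2 := by positivity
  have p (k : ℕ) : 0 ≤ (w ^ 2) ^ k := pow_nonneg hs k
  have hT6 : T ^ 6 = 1 + w ^ 2 + 2 * (w ^ 2) ^ 2 + (w ^ 2) ^ 3 := by
    have : T ^ 6 = 1 + y ^ 2 := by rw [← hX2, ← e3]; ring
    rw [this, ← hc]; ring
  refine ⟨?_, ?_, ?_⟩
  · rw [← pow_le_pow_iff_left₀ (abs_nonneg w) hT.le (by norm_num : 6 ≠ 0), hT6]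
    have : |w| ^ 6 = (w ^ 2) ^ 3 := by rw [← sq_abs w]; ring
    rw [this]; linarith [p 2]
  · rw [abs_inv, abs_neg, abs_of_pos hp]
    apply inv_anti₀ (by positivity)
    rw [← pow_le_pow_iff_left₀ (by positivity) hp.le (by norm_num : 3 ≠ 0)]
    have : (T ^ 2) ^ 3 = T ^ 6 := by ring
    rw [this, hT6]; linarith [p 1, p 2, p 3]
  · rw [abs_div, abs_neg, abs_mul, abs_of_pos (pow_pos hp 3), div_le_iff₀ (by positivity),
      inv_mul_eq_div, le_div_iff₀ (by positivity),
      ← pow_le_pow_iff_left₀ (by positivity) (by positivity) (by norm_num : 6 ≠ 0)]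
    have h6 : (|(6 : ℝ)| * |w| * T ^ 5) ^ 6 = 46656 * (w ^ 2) ^ 3 * (T ^ 6) ^ 5 := by
      rw [← sq_abs w, abs_of_pos (by norm_num : (0 : ℝ) < 6)]; ring
    rw [h6, hT6]
    refine (Wbar_poly _ hs).trans (le_of_eq (by ring))
end
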